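/- arXiv:2308.08858 — 3 statements merged into one kernel-verified Lean document; each statement's English description precedes it below -/
import Mathlib

section
/- For any step h ∈ [H] and any episode j ∈ [K], the run of Algorithm 1 satisfies Σ_{k=1}^K (1/ň_h^k) Σ_{i=1}^{ň_h^k} 1{j = ℓ̌_{h,i}^k} ≤ 1 + 1/H. -/
open Finset MeasureTheory

namespace ZSMG

/-! ## Stage structure of the stage-based algorithm -/

/-- Stage lengths (`0`-indexed): `stageLen H 0 = e₁ = H` and
`stageLen H (i+1) = ⌊(1 + 1/H) * stageLen H i⌋`. -/
def stageLen (H : ℕ) : ℕ → ℕ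
  | 0 => H
  | i + 1 => stageLen H i + stageLen H i / H

/-- Total number of visits contained in the first `m` stages. -/
def stageEnd (H m : ℕ) : ℕ := ∑ i ∈ Finset.range m, stageLen H i

/-- `n` is the ending index of some stage (the set `𝓛` of the paper). -/
def IsStageEnd (H n : ℕ) : Prop := ∃ m : ℕ, n = stageEnd H (m + 1)

/-- Index (0-based) of the stage containing the `(n+1)`-st visit,
where `n` is the number of previous visits. -/
noncomputable def curStage (H n : ℕ) : ℕ := sInf {m | n < stageEnd H (m + 1)}

/-- `ň`: the number of visits in the stage immediately preceding the current stage. -/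
noncomputable def checkCnt (H n : ℕ) : ℕ :=
  if curStage H n = 0 then 0 else stageLen H (curStage H n - 1)

/-- `n`: the number of visits in all completed stages. -/
noncomputable def globCnt (H n : ℕ) : ℕ := stageEnd H (curStage H n)

/-- a probability vector on the finite type `α`. -/
def IsProbVec {α : Type*} [Fintype α] (p : α → ℝ) : Prop :=
  (∀ i, 0 ≤ p i) ∧ ∑ i, p i = 1

/-! ## Visit counting along a trajectory -/

section Counts

variable {S A B : Type*} [DecidableEq S] [DecidableEq A] [DecidableEq B]

/-- `N_h^k(s,a,b)`: the number of visits to `y = (s,a,b)` at step `h`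
before episode `k`. -/
def Nvis (x : ℕ → ℕ → S × A × B) (h k : ℕ) (y : S × A × B) : ℕ :=
  ((Finset.Ico 1 k).filter fun j => x j h = y).card

/-- `n_h^k(s)`: the number of visits to the state `s` at step `h` before episode `k`. -/
def NvisS {σ : Type*} [DecidableEq σ] (st : ℕ → ℕ → σ) (h k : ℕ) (s : σ) : ℕ :=
  ((Finset.Ico 1 k).filter fun j => st j h = s).card

/-- the episode of the `i`-th (1-based) visit to `y` at step `h`. -/
noncomputable def visitEp (x : ℕ → ℕ → S × A × B) (h : ℕ) (y : S × A × B) (i : ℕ) : ℕ :=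
  sInf {j | x j h = y ∧ Nvis x h j y = i - 1}

/-- `n_h^k` for the triple visited at step `h` of episode `k`. -/
noncomputable def nGlob (x : ℕ → ℕ → S × A × B) (H h k : ℕ) : ℕ :=
  globCnt H (Nvis x h k (x k h))

/-- `ň_h^k` for the triple visited at step `h` of episode `k`. -/
noncomputable def nCheck (x : ℕ → ℕ → S × A × B) (H h k : ℕ) : ℕ :=
  checkCnt H (Nvis x h k (x k h))

/-- `ℓ_{h,i}^k`: the episode of the `i`-th visit (among all episodes) to the triple
visited at step `h` of episode `k`. -/
noncomputable def ell (x : ℕ → ℕ → S × A × B) (h k i : ℕ) : ℕ := visitEp x h (x k h) i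

/-- `ℓ̌_{h,i}^k` relative to an arbitrary triple `y`. -/
noncomputable def ellCheckAt (x : ℕ → ℕ → S × A × B) (H h k : ℕ) (y : S × A × B) (i : ℕ) : ℕ :=
  visitEp x h y (stageEnd H (curStage H (Nvis x h k y) - 1) + i)

/-- `ℓ̌_{h,i}^k`: the episode of the `i`-th visit, in the stage immediately preceding the
current stage, to the triple visited at step `h` of episode `k`. -/
noncomputable def ellCheck (x : ℕ → ℕ → S × A × B) (H h k i : ℕ) : ℕ :=
  ellCheckAt x H h k (x k h) i

end Counts

/-! ## Values of Markov games -/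

section Game

variable {S A B : Type*} [Fintype S] [Fintype A] [Fintype B]

/-- `Pm h s a b` is a transition probability vector for every `(h,s,a,b)`. -/
def IsTransKernel (Pm : ℕ → S → A → B → S → ℝ) : Prop := ∀ h s a b, IsProbVec (Pm h s a b)

/-- `𝕍(p, f) = pᵀ (f²) - (pᵀ f)²`. -/
def Vvar (p f : S → ℝ) : ℝ := (∑ s, p s * f s ^ 2) - (∑ s, p s * f s) ^ 2

/-- `(P_h f)(s,a,b) = E_{s' ~ P_h(·|s,a,b)} [f s']`. -/
def Pexp (Pm : ℕ → S → A → B → S → ℝ) (h : ℕ) (s : S) (a : A) (b : B) (f : S → ℝ) : ℝ :=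
  ∑ s', Pm h s a b s' * f s'

/-- coarse correlated equilibrium of the pair of matrices `(Qu, Ql)`. -/
def IsCCE (pi Qu Ql : A → B → ℝ) : Prop :=
  IsProbVec (fun ab : A × B => pi ab.1 ab.2) ∧
  (∀ a' : A, ∑ a, ∑ b, pi a b * Qu a' b ≤ ∑ a, ∑ b, pi a b * Qu a b) ∧
  (∀ b' : B, ∑ a, ∑ b, pi a b * Ql a b ≤ ∑ a, ∑ b, pi a b * Ql a b')

/-- value of the correlated Markov policy `pol` with `t` steps remaining
(so at step `H - t + 1`). -/
noncomputable def VpiAux (H : ℕ) (Pm : ℕ → S → A → B → S → ℝ) (r : ℕ → S → A → B → ℝ)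
    (pol : ℕ → S → A → B → ℝ) : ℕ → S → ℝ
  | 0, _ => 0
  | t + 1, s => ∑ a, ∑ b, pol (H - t) s a b *
      (r (H - t) s a b + ∑ s', Pm (H - t) s a b s' * VpiAux H Pm r pol t s')

/-- `V_h^π(s)` for a correlated Markov policy `π`. -/
noncomputable def Vpi (H : ℕ) (Pm : ℕ → S → A → B → S → ℝ) (r : ℕ → S → A → B → ℝ)
    (pol : ℕ → S → A → B → ℝ) (h : ℕ) (s : S) : ℝ := VpiAux H Pm r pol (H + 1 - h) s

/-- `Q_h^π(s,a,b)` for a correlated Markov policy `π`. -/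
noncomputable def Qpi (H : ℕ) (Pm : ℕ → S → A → B → S → ℝ) (r : ℕ → S → A → B → ℝ)
    (pol : ℕ → S → A → B → ℝ) (h : ℕ) (s : S) (a : A) (b : B) : ℝ :=
  r h s a b + ∑ s', Pm h s a b s' * Vpi H Pm r pol (h + 1) s'

/-- Nash value with `t` steps remaining. -/
noncomputable def VstarAux (H : ℕ) (Pm : ℕ → S → A → B → S → ℝ)
    (r : ℕ → S → A → B → ℝ) : ℕ → S → ℝ
  | 0, _ => 0
  | t + 1, s =>
      ⨆ p ∈ {p : A → ℝ | IsProbVec p}, ⨅ q ∈ {q : B → ℝ | IsProbVec q},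
        ∑ a, ∑ b, p a * q b *
          (r (H - t) s a b + ∑ s', Pm (H - t) s a b s' * VstarAux H Pm r t s')

/-- `V_h^*`: the Nash equilibrium value function. -/
noncomputable def Vstar (H : ℕ) (Pm : ℕ → S → A → B → S → ℝ) (r : ℕ → S → A → B → ℝ)
    (h : ℕ) (s : S) : ℝ := VstarAux H Pm r (H + 1 - h) s

/-- `Q_h^*`: the Nash equilibrium action-value function. -/
noncomputable def Qstar (H : ℕ) (Pm : ℕ → S → A → B → S → ℝ) (r : ℕ → S → A → B → ℝ)
    (h : ℕ) (s : S) (a : A) (b : B) : ℝ :=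
  r h s a b + ∑ s', Pm h s a b s' * Vstar H Pm r (h + 1) s'

/-- value of a pair of general (history-dependent) policies, with `t` steps remaining;
the history is the reversed list of the previously visited `(s,a,b)` triples. -/
noncomputable def VgenAux (H : ℕ) (Pm : ℕ → S → A → B → S → ℝ) (r : ℕ → S → A → B → ℝ)
    (mu : List (S × A × B) → S → A → ℝ) (nu : List (S × A × B) → S → B → ℝ) :
    ℕ → List (S × A × B) → S → ℝ
  | 0, _, _ => 0
  | t + 1, hist, s => ∑ a, ∑ b, mu hist s a * nu hist s b *
      (r (H - t) s a b + ∑ s', Pm (H - t) s a b s' * VgenAux H Pm r mu nu t ((s, a, b) :: hist) s')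

/-- `V₁^{μ,ν}(s)` for general policies `μ, ν`. -/
noncomputable def Vgen (H : ℕ) (Pm : ℕ → S → A → B → S → ℝ) (r : ℕ → S → A → B → ℝ)
    (mu : List (S × A × B) → S → A → ℝ) (nu : List (S × A × B) → S → B → ℝ) (s : S) : ℝ :=
  VgenAux H Pm r mu nu H [] s

/-- `V₁^{†,ν}(s) = sup_μ V₁^{μ,ν}(s)`: value of the best response against `ν`. -/
noncomputable def VdagNu (H : ℕ) (Pm : ℕ → S → A → B → S → ℝ) (r : ℕ → S → A → B → ℝ)
    (nu : List (S × A × B) → S → B → ℝ) (s : S) : ℝ :=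
  ⨆ mu ∈ {mu : List (S × A × B) → S → A → ℝ | ∀ hist s', IsProbVec (mu hist s')},
    Vgen H Pm r mu nu s

/-- `V₁^{μ,†}(s) = inf_ν V₁^{μ,ν}(s)`: value of `μ` against its best response. -/
noncomputable def VmuDag (H : ℕ) (Pm : ℕ → S → A → B → S → ℝ) (r : ℕ → S → A → B → ℝ)
    (mu : List (S × A × B) → S → A → ℝ) (s : S) : ℝ :=
  ⨅ nu ∈ {nu : List (S × A × B) → S → B → ℝ | ∀ hist s', IsProbVec (nu hist s')},
    Vgen H Pm r mu nu s

end Game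

/-! ## The certified policies of Algorithm 2 -/

section Certified

variable {S A B : Type*} [Fintype S] [Fintype A] [Fintype B]
  [DecidableEq S] [DecidableEq A] [DecidableEq B]

/-- Weight placed on episode `k` by the certified-policy construction after observing the
(reversed) history `hist`; `g k h y` is the probability that the policy of episode `k`
takes the relevant player's own action of `y` at step `h`. -/
noncomputable def certW (x : ℕ → ℕ → S × A × B) (H K : ℕ) (g : ℕ → ℕ → S × A × B → ℝ) :
    List (S × A × B) → ℕ → ℝ
  | [], k => if k ∈ Finset.Icc 1 K then (K : ℝ)⁻¹ else 0
  | y :: hist, k' =>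
      (∑ k ∈ Finset.Icc 1 K, certW x H K g hist k * g k (hist.length + 1) y *
          (Nvis x (hist.length + 1) k y : ℝ)⁻¹ *
          (((Finset.Icc 1 (Nvis x (hist.length + 1) k y)).filter
              fun j => ellCheckAt x H (hist.length + 1) k y j = k').card : ℝ)) /
        ∑ k ∈ Finset.Icc 1 K, certW x H K g hist k * g k (hist.length + 1) y

/-- `μ^out`: the certified policy of the max-player (Algorithm 2), as a general policy. -/
noncomputable def certMax (x : ℕ → ℕ → S × A × B) (H K : ℕ)
    (pol : ℕ → ℕ → S → A → B → ℝ) : List (S × A × B) → S → A → ℝ := fun hist s a =>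
  ∑ k ∈ Finset.Icc 1 K,
    certW x H K (fun k' h' y => ∑ b, pol k' h' y.1 y.2.1 b) hist k *
      ∑ b, pol k (hist.length + 1) s a b

/-- `ν^out`: the certified policy of the min-player, as a general policy. -/
noncomputable def certMin (x : ℕ → ℕ → S × A × B) (H K : ℕ)
    (pol : ℕ → ℕ → S → A → B → ℝ) : List (S × A × B) → S → B → ℝ := fun hist s b =>
  ∑ k ∈ Finset.Icc 1 K,
    certW x H K (fun k' h' y => ∑ a, pol k' h' y.1 a y.2.2) hist k *
      ∑ a, pol k (hist.length + 1) s a b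

end Certified

/-! ## Data describing one run of Algorithm 1 -/

/-- All quantities maintained by Algorithm 1 along one run: the trajectory
`(s_h^k, a_h^k, b_h^k)`, the CCE policies `π_h^k`, and the optimistic/pessimistic
(action-)value and reference value functions, each indexed by
(episode, step); the value at episode `k` is the value at the *beginning* of episode `k`. -/
structure RunData (S A B : Type*) where
  st : ℕ → ℕ → S
  aa : ℕ → ℕ → A
  bb : ℕ → ℕ → B
  pol : ℕ → ℕ → S → A → B → ℝ
  Qup : ℕ → ℕ → S → A → B → ℝ
  Qlo : ℕ → ℕ → S → A → B → ℝ
  Vup : ℕ → ℕ → S → ℝ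
  Vlo : ℕ → ℕ → S → ℝ
  VrefUp : ℕ → ℕ → S → ℝ
  VrefLo : ℕ → ℕ → S → ℝ

namespace RunData

variable {S A B : Type*} [DecidableEq S] [DecidableEq A] [DecidableEq B] (R : RunData S A B)

/-- the trajectory of visited triples. -/
def x : ℕ → ℕ → S × A × B := fun k h => (R.st k h, R.aa k h, R.bb k h)

/-- `n_h^k`. -/
noncomputable def n (H h k : ℕ) : ℕ := nGlob R.x H h k

/-- `ň_h^k`. -/
noncomputable def nchk (H h k : ℕ) : ℕ := nCheck R.x H h k

/-- `ℓ_{h,i}^k`. -/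
noncomputable def L (h k i : ℕ) : ℕ := ell R.x h k i

/-- `ℓ̌_{h,i}^k`. -/
noncomputable def Lc (H h k i : ℕ) : ℕ := ellCheck R.x H h k i

/-- `v̌/ň` for the optimistic values. -/
noncomputable def vChkUp (H h k : ℕ) : ℝ :=
  (∑ i ∈ Finset.Icc 1 (R.nchk H h k),
    R.Vup (R.Lc H h k i) (h + 1) (R.st (R.Lc H h k i) (h + 1))) / (R.nchk H h k : ℝ)

/-- `v̌/ň` for the pessimistic values. -/
noncomputable def vChkLo (H h k : ℕ) : ℝ :=
  (∑ i ∈ Finset.Icc 1 (R.nchk H h k),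
    R.Vlo (R.Lc H h k i) (h + 1) (R.st (R.Lc H h k i) (h + 1))) / (R.nchk H h k : ℝ)

/-- `μ̄^ref/n`. -/
noncomputable def refMeanUp (H h k : ℕ) : ℝ :=
  (∑ i ∈ Finset.Icc 1 (R.n H h k),
    R.VrefUp (R.L h k i) (h + 1) (R.st (R.L h k i) (h + 1))) / (R.n H h k : ℝ)

/-- `μ̲^ref/n`. -/
noncomputable def refMeanLo (H h k : ℕ) : ℝ :=
  (∑ i ∈ Finset.Icc 1 (R.n H h k),
    R.VrefLo (R.L h k i) (h + 1) (R.st (R.L h k i) (h + 1))) / (R.n H h k : ℝ)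

/-- `ν̄^{ref} = σ̄^{ref}/n - (μ̄^{ref}/n)²`. -/
noncomputable def nuRefUp (H h k : ℕ) : ℝ :=
  (∑ i ∈ Finset.Icc 1 (R.n H h k),
    R.VrefUp (R.L h k i) (h + 1) (R.st (R.L h k i) (h + 1)) ^ 2) / (R.n H h k : ℝ)
    - R.refMeanUp H h k ^ 2

/-- `ν̲^{ref} = σ̲^{ref}/n - (μ̲^{ref}/n)²`. -/
noncomputable def nuRefLo (H h k : ℕ) : ℝ :=
  (∑ i ∈ Finset.Icc 1 (R.n H h k),
    R.VrefLo (R.L h k i) (h + 1) (R.st (R.L h k i) (h + 1)) ^ 2) / (R.n H h k : ℝ)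
    - R.refMeanLo H h k ^ 2

/-- `μ̌̄/ň`: mean of the optimistic advantages over the previous stage. -/
noncomputable def advMeanUp (H h k : ℕ) : ℝ :=
  (∑ i ∈ Finset.Icc 1 (R.nchk H h k),
    (R.Vup (R.Lc H h k i) (h + 1) (R.st (R.Lc H h k i) (h + 1)) -
     R.VrefUp (R.Lc H h k i) (h + 1) (R.st (R.Lc H h k i) (h + 1)))) / (R.nchk H h k : ℝ)

/-- `μ̲̌/ň`: mean of the pessimistic advantages over the previous stage. -/
noncomputable def advMeanLo (H h k : ℕ) : ℝ :=
  (∑ i ∈ Finset.Icc 1 (R.nchk H h k),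
    (R.Vlo (R.Lc H h k i) (h + 1) (R.st (R.Lc H h k i) (h + 1)) -
     R.VrefLo (R.Lc H h k i) (h + 1) (R.st (R.Lc H h k i) (h + 1)))) / (R.nchk H h k : ℝ)

/-- `ν̌̄ = σ̌̄/ň - (μ̌̄/ň)²`. -/
noncomputable def nuChkUp (H h k : ℕ) : ℝ :=
  (∑ i ∈ Finset.Icc 1 (R.nchk H h k),
    (R.Vup (R.Lc H h k i) (h + 1) (R.st (R.Lc H h k i) (h + 1)) -
     R.VrefUp (R.Lc H h k i) (h + 1) (R.st (R.Lc H h k i) (h + 1))) ^ 2) / (R.nchk H h k : ℝ)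
    - R.advMeanUp H h k ^ 2

/-- `ν̲̌ = σ̲̌/ň - (μ̲̌/ň)²`. -/
noncomputable def nuChkLo (H h k : ℕ) : ℝ :=
  (∑ i ∈ Finset.Icc 1 (R.nchk H h k),
    (R.Vlo (R.Lc H h k i) (h + 1) (R.st (R.Lc H h k i) (h + 1)) -
     R.VrefLo (R.Lc H h k i) (h + 1) (R.st (R.Lc H h k i) (h + 1))) ^ 2) / (R.nchk H h k : ℝ)
    - R.advMeanLo H h k ^ 2

/-- the Hoeffding-type bonus `γ = 2√(H²ι/ň)`. -/
noncomputable def gammaB (H : ℕ) (iota : ℝ) (h k : ℕ) : ℝ :=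
  2 * Real.sqrt ((H : ℝ) ^ 2 * iota / (R.nchk H h k : ℝ))

/-- the optimistic variance-based bonus `β̄`. -/
noncomputable def betaUp (H : ℕ) (iota c1 c2 c3 : ℝ) (h k : ℕ) : ℝ :=
  c1 * Real.sqrt (R.nuRefUp H h k * iota / (R.n H h k : ℝ)) +
  c2 * Real.sqrt (R.nuChkUp H h k * iota / (R.nchk H h k : ℝ)) +
  c3 * ((H : ℝ) * iota / (R.n H h k : ℝ) + (H : ℝ) * iota / (R.nchk H h k : ℝ) +
    (H : ℝ) * iota ^ (3 / 4 : ℝ) / (R.n H h k : ℝ) ^ (3 / 4 : ℝ) +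
    (H : ℝ) * iota ^ (3 / 4 : ℝ) / (R.nchk H h k : ℝ) ^ (3 / 4 : ℝ))

/-- the pessimistic variance-based bonus `β̲`. -/
noncomputable def betaLo (H : ℕ) (iota c1 c2 c3 : ℝ) (h k : ℕ) : ℝ :=
  c1 * Real.sqrt (R.nuRefLo H h k * iota / (R.n H h k : ℝ)) +
  c2 * Real.sqrt (R.nuChkLo H h k * iota / (R.nchk H h k : ℝ)) +
  c3 * ((H : ℝ) * iota / (R.n H h k : ℝ) + (H : ℝ) * iota / (R.nchk H h k : ℝ) +
    (H : ℝ) * iota ^ (3 / 4 : ℝ) / (R.n H h k : ℝ) ^ (3 / 4 : ℝ) +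
    (H : ℝ) * iota ^ (3 / 4 : ℝ) / (R.nchk H h k : ℝ) ^ (3 / 4 : ℝ))

section WithFintype

variable [Fintype S] [Fintype A] [Fintype B]

/-- `ψ_{h+1}^k`. -/
noncomputable def psiTerm (Pm : ℕ → S → A → B → S → ℝ) (H K h k : ℕ) : ℝ :=
  Pexp Pm h (R.st k h) (R.aa k h) (R.bb k h) fun s' =>
    (∑ i ∈ Finset.Icc 1 (R.n H h k),
        (R.VrefUp (R.L h k i) (h + 1) s' - R.VrefLo (R.L h k i) (h + 1) s')) / (R.n H h k : ℝ) -
      (R.VrefUp (K + 1) (h + 1) s' - R.VrefLo (K + 1) (h + 1) s')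

/-- `ξ_{h+1}^k`. -/
noncomputable def xiTerm (Pm : ℕ → S → A → B → S → ℝ) (H h k : ℕ) : ℝ :=
  (∑ i ∈ Finset.Icc 1 (R.nchk H h k),
      (Pexp Pm h (R.st k h) (R.aa k h) (R.bb k h)
          (fun s' => R.Vup (R.Lc H h k i) (h + 1) s' - R.Vlo (R.Lc H h k i) (h + 1) s') -
        (R.Vup (R.Lc H h k i) (h + 1) (R.st (R.Lc H h k i) (h + 1)) -
          R.Vlo (R.Lc H h k i) (h + 1) (R.st (R.Lc H h k i) (h + 1))))) / (R.nchk H h k : ℝ)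

/-- `Λ_{h+1}^k = ψ_{h+1}^k + ξ_{h+1}^k + 2β̄_h^k + 2β̲_h^k`. -/
noncomputable def lamTerm (Pm : ℕ → S → A → B → S → ℝ) (H K : ℕ) (iota c1 c2 c3 : ℝ)
    (h k : ℕ) : ℝ :=
  R.psiTerm Pm H K h k + R.xiTerm Pm H h k +
    2 * R.betaUp H iota c1 c2 c3 h k + 2 * R.betaLo H iota c1 c2 c3 h k

/-- `R` is a run of Algorithm 1 (with parameters `H K r ι c₁ c₂ c₃ N₀`): initialization,
stage-end update rules for the optimistic and pessimistic action-value functions, CCE policy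
and value updates, and the min-gap reference-value update. -/
def Valid (H K : ℕ) (r : ℕ → S → A → B → ℝ) (iota c1 c2 c3 : ℝ) (N0 : ℕ) : Prop :=
  (∀ h, 1 ≤ h → h ≤ H → ∀ s a b,
      R.Qup 1 h s a b = (H : ℝ) - h + 1 ∧ R.Qlo 1 h s a b = 0) ∧
  (∀ h, 1 ≤ h → h ≤ H → ∀ s,
      R.Vup 1 h s = (H : ℝ) - h + 1 ∧ R.Vlo 1 h s = 0 ∧
      R.VrefUp 1 h s = (H : ℝ) ∧ R.VrefLo 1 h s = 0) ∧
  (∀ k s, R.Vup k (H + 1) s = 0 ∧ R.Vlo k (H + 1) s = 0 ∧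
      R.VrefUp k (H + 1) s = 0 ∧ R.VrefLo k (H + 1) s = 0) ∧
  (∀ k h s, IsProbVec fun ab : A × B => R.pol k h s ab.1 ab.2) ∧
  (∀ k, 1 ≤ k → k ≤ K → ∀ h, 1 ≤ h → h ≤ H → ∀ s a b,
    (((s, a, b) = R.x k h ∧ IsStageEnd H (Nvis R.x h (k + 1) (R.x k h))) →
      R.Qup (k + 1) h s a b =
        min (min (r h s a b + R.vChkUp H h k + R.gammaB H iota h k)
              (r h s a b + R.refMeanUp H h k + R.advMeanUp H h k +
                R.betaUp H iota c1 c2 c3 h k))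
          (R.Qup k h s a b) ∧
      R.Qlo (k + 1) h s a b =
        max (max (r h s a b + R.vChkLo H h k - R.gammaB H iota h k)
              (r h s a b + R.refMeanLo H h k + R.advMeanLo H h k -
                R.betaLo H iota c1 c2 c3 h k))
          (R.Qlo k h s a b)) ∧
    (¬((s, a, b) = R.x k h ∧ IsStageEnd H (Nvis R.x h (k + 1) (R.x k h))) →
      R.Qup (k + 1) h s a b = R.Qup k h s a b ∧ R.Qlo (k + 1) h s a b = R.Qlo k h s a b)) ∧
  (∀ k, 1 ≤ k → k ≤ K → ∀ h, 1 ≤ h → h ≤ H → ∀ s,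
    ((s = R.st k h ∧ IsStageEnd H (Nvis R.x h (k + 1) (R.x k h))) →
      IsCCE (fun a b => R.pol (k + 1) h s a b) (fun a b => R.Qup (k + 1) h s a b)
        (fun a b => R.Qlo (k + 1) h s a b) ∧
      R.Vup (k + 1) h s = ∑ a, ∑ b, R.pol (k + 1) h s a b * R.Qup (k + 1) h s a b ∧
      R.Vlo (k + 1) h s = ∑ a, ∑ b, R.pol (k + 1) h s a b * R.Qlo (k + 1) h s a b) ∧
    (¬(s = R.st k h ∧ IsStageEnd H (Nvis R.x h (k + 1) (R.x k h))) →
      R.pol (k + 1) h s = R.pol k h s ∧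
      R.Vup (k + 1) h s = R.Vup k h s ∧ R.Vlo (k + 1) h s = R.Vlo k h s)) ∧
  (∀ k, 1 ≤ k → k ≤ K → ∀ h, 1 ≤ h → h ≤ H → ∀ s,
    ((s = R.st k h ∧ NvisS R.st h (k + 1) s = N0) →
      ∃ j, 1 ≤ j ∧ j ≤ k + 1 ∧
        R.VrefUp (k + 1) h s = R.Vup j h s ∧ R.VrefLo (k + 1) h s = R.Vlo j h s ∧
        ∀ j', 1 ≤ j' → j' ≤ k + 1 →
          R.Vup j h s - R.Vlo j h s ≤ R.Vup j' h s - R.Vlo j' h s) ∧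
    (¬(s = R.st k h ∧ NvisS R.st h (k + 1) s = N0) →
      R.VrefUp (k + 1) h s = R.VrefUp k h s ∧ R.VrefLo (k + 1) h s = R.VrefLo k h s))

end WithFintype

end RunData

/-- The probabilistic structure of a run of Algorithm 1 on the Markov game with transition
kernel `Pm`: with respect to the filtration `F` (indexed by the time `(k-1)*(H+1)+h`), the
trajectory is adapted, the next state is sampled from `P_h(·|s_h^k,a_h^k,b_h^k)`, and the
actions are sampled from the CCE policy `π_h^k`. -/
def SampledRun {S A B : Type*} [Fintype S] [Fintype A] [Fintype B]
    [MeasurableSpace S] [MeasurableSpace A] [MeasurableSpace B]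
    {Ω : Type*} [m0 : MeasurableSpace Ω] (P : Measure Ω)
    (H : ℕ) (Pm : ℕ → S → A → B → S → ℝ)
    (Rv : Ω → RunData S A B) (F : Filtration ℕ m0) : Prop :=
  (∀ k h, 1 ≤ k → 1 ≤ h → h ≤ H + 1 →
      @Measurable Ω S (F ((k - 1) * (H + 1) + h)) _ fun ω => (Rv ω).st k h) ∧
  (∀ k h, 1 ≤ k → 1 ≤ h → h ≤ H →
      (@Measurable Ω A (F ((k - 1) * (H + 1) + h)) _ fun ω => (Rv ω).aa k h) ∧
      (@Measurable Ω B (F ((k - 1) * (H + 1) + h)) _ fun ω => (Rv ω).bb k h)) ∧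
  (∀ k h, 1 ≤ k → 1 ≤ h → h ≤ H → ∀ f : S → ℝ,
      (P[(fun ω => f ((Rv ω).st k (h + 1)))|F ((k - 1) * (H + 1) + h)]) =ᵐ[P]
        fun ω => ∑ s', Pm h ((Rv ω).st k h) ((Rv ω).aa k h) ((Rv ω).bb k h) s' * f s') ∧
  (∀ k h, 1 ≤ k → 1 ≤ h → h ≤ H → ∀ f : A → B → ℝ,
      (P[(fun ω => f ((Rv ω).aa k h) ((Rv ω).bb k h))|F ((k - 1) * (H + 1) + h - 1)]) =ᵐ[P]
        fun ω => ∑ a, ∑ b, (Rv ω).pol k h ((Rv ω).st k h) a b * f a b)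


/-!
Suppose the visit of episode `j` falls in stage `m` of its triple. Only the visits to the same triple
in stage `m + 1` look back at stage `m`; there are at most `e_{m+1}` of them, and each gives `j` the
weight `1 / e_m`, since distinct indices of the previous stage name distinct episodes. The total is
at most `e_{m+1} / e_m ≤ 1 + 1/H`.
-/

theorem stageEnd_succ (H m : ℕ) : stageEnd H (m + 1) = stageEnd H m + stageLen H m :=
  Finset.sum_range_succ _ _

theorem le_stageLen (H m : ℕ) : H ≤ stageLen H m := by
  induction m with
  | zero => exact le_rfl
  | succ m ih => exact ih.trans (Nat.le_add_right _ _)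

theorem stageEnd_strictMono {H : ℕ} (hH : 0 < H) : StrictMono (stageEnd H) :=
  strictMono_nat_of_lt_succ fun m => by
    rw [stageEnd_succ]
    exact Nat.lt_add_of_pos_right (hH.trans_le (le_stageLen H m))

theorem stageLen_succ_le (H m : ℕ) :
    (stageLen H (m + 1) : ℝ) ≤ (1 + 1 / (H : ℝ)) * stageLen H m :=
  calc (stageLen H (m + 1) : ℝ)
      = stageLen H m + ((stageLen H m / H : ℕ) : ℝ) := Nat.cast_add _ _
    _ ≤ stageLen H m + (stageLen H m : ℝ) / H := by gcongr; exact Nat.cast_div_le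
    _ = (1 + 1 / (H : ℝ)) * stageLen H m := by ring

theorem stageLen_succ_div_le (H m : ℕ) :
    (stageLen H (m + 1) : ℝ) / stageLen H m ≤ 1 + 1 / (H : ℝ) :=
  div_le_of_le_mul₀ (by positivity) (by positivity) (stageLen_succ_le H m)

theorem stageEnd_curStage_le (H n : ℕ) : stageEnd H (curStage H n) ≤ n := by
  rcases h : curStage H n with _ | m
  · simp [stageEnd]
  · have hm : m < curStage H n := h ▸ Nat.lt_succ_self m
    exact not_lt.1 (Nat.notMem_of_lt_sInf (s := {m | n < stageEnd H (m + 1)}) hm)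

theorem lt_stageEnd_curStage_succ {H : ℕ} (hH : 0 < H) (n : ℕ) :
    n < stageEnd H (curStage H n + 1) :=
  Nat.sInf_mem (s := {m | n < stageEnd H (m + 1)}) ⟨n, (stageEnd_strictMono hH).le_apply⟩

theorem curStage_eq_iff {H : ℕ} (hH : 0 < H) {n m : ℕ} :
    curStage H n = m ↔ n ∈ Finset.Ico (stageEnd H m) (stageEnd H (m + 1)) := by
  rw [Finset.mem_Ico]
  constructor
  · rintro rfl
    exact ⟨stageEnd_curStage_le H n, lt_stageEnd_curStage_succ hH n⟩
  · rintro ⟨hle, hlt⟩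
    exact le_antisymm (Nat.sInf_le hlt) <| Nat.le_of_lt_succ <|
      (stageEnd_strictMono hH).lt_iff_lt.1 (hle.trans_lt (lt_stageEnd_curStage_succ hH n))

theorem checkCnt_of_curStage_eq_succ {H n m : ℕ} (hm : curStage H n = m + 1) :
    checkCnt H n = stageLen H m := by
  simp [checkCnt, hm]

theorem exists_curStage_eq_succ_of_checkCnt_pos {H n : ℕ} (hn : 0 < checkCnt H n) :
    ∃ m, curStage H n = m + 1 :=
  Nat.exists_eq_succ_of_ne_zero fun h₀ => hn.ne' (if_pos h₀)

section Visits

variable {S A B : Type*} [DecidableEq S] [DecidableEq A] [DecidableEq B]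

theorem Nvis_strictMonoOn (x : ℕ → ℕ → S × A × B) (h : ℕ) (y : S × A × B) :
    StrictMonoOn (fun k => Nvis x h k y) {k | 1 ≤ k ∧ x k h = y} := by
  rintro k ⟨hk, hky⟩ k' - hlt
  refine Finset.card_lt_card (Finset.ssubset_iff_of_subset ?_ |>.2 ⟨k, ?_, ?_⟩)
  · exact Finset.filter_subset_filter _ (Finset.Ico_subset_Ico_right hlt.le)
  · exact Finset.mem_filter.2 ⟨Finset.mem_Ico.2 ⟨hk, hlt⟩, hky⟩
  · simp

-- Episodes are numbered from `1`, so `1 ≤ visitEp x h y i` rules out the junk value `sInf ∅ = 0`.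
theorem visitEp_spec {x : ℕ → ℕ → S × A × B} {h i : ℕ} {y : S × A × B}
    (hpos : 1 ≤ visitEp x h y i) :
    x (visitEp x h y i) h = y ∧ Nvis x h (visitEp x h y i) y = i - 1 :=
  Nat.sInf_mem (s := {j | x j h = y ∧ Nvis x h j y = i - 1}) (Nat.nonempty_of_pos_sInf hpos)

theorem visitEp_injOn (x : ℕ → ℕ → S × A × B) (h : ℕ) (y : S × A × B) :
    Set.InjOn (visitEp x h y) {i | 1 ≤ i ∧ 1 ≤ visitEp x h y i} := by
  rintro i ⟨hi, hpos⟩ i' ⟨hi', hpos'⟩ heq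
  have hcount : i - 1 = i' - 1 := by
    rw [← (visitEp_spec hpos).2, ← (visitEp_spec hpos').2, heq]
  omega

theorem ellCheck_injOn (x : ℕ → ℕ → S × A × B) (H h k : ℕ) :
    Set.InjOn (ellCheck x H h k) {i | 1 ≤ i ∧ 1 ≤ ellCheck x H h k i} := by
  rintro i ⟨hi, hpos⟩ i' ⟨hi', hpos'⟩ heq
  exact Nat.add_left_cancel <|
    visitEp_injOn x h (x k h) ⟨le_add_left hi, hpos⟩ ⟨le_add_left hi', hpos'⟩ heq

/-- The episodes `1 ≤ k ≤ K` whose visit at step `h` is to the triple `y` and falls in stage `m`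
(numbered from `0`) of that triple. -/
noncomputable def stageEpisodes (x : ℕ → ℕ → S × A × B) (H h K : ℕ) (y : S × A × B) (m : ℕ) :
    Finset ℕ :=
  {k ∈ Finset.Icc 1 K | x k h = y ∧ curStage H (Nvis x h k y) = m}

theorem stageEpisodes_subset (x : ℕ → ℕ → S × A × B) (H h K : ℕ) (y : S × A × B) (m : ℕ) :
    stageEpisodes x H h K y m ⊆ Finset.Icc 1 K :=
  Finset.filter_subset _ _

theorem card_stageEpisodes_le (x : ℕ → ℕ → S × A × B) {H : ℕ} (hH : 0 < H) (h K : ℕ)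
    (y : S × A × B) (m : ℕ) : (stageEpisodes x H h K y m).card ≤ stageLen H m := by
  have hmem {k : ℕ} (hk : k ∈ stageEpisodes x H h K y m) :
      (1 ≤ k ∧ x k h = y) ∧ curStage H (Nvis x h k y) = m := by
    obtain ⟨hkK, hky, hkm⟩ := Finset.mem_filter.1 hk
    exact ⟨⟨(Finset.mem_Icc.1 hkK).1, hky⟩, hkm⟩
  calc (stageEpisodes x H h K y m).card
      ≤ (Finset.Ico (stageEnd H m) (stageEnd H (m + 1))).card :=
        Finset.card_le_card_of_injOn (fun k => Nvis x h k y)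
          (fun _ hk => (curStage_eq_iff hH).1 (hmem hk).2)
          ((Nvis_strictMonoOn x h y).injOn.mono fun _ hk => (hmem hk).1)
    _ = stageLen H m := by rw [Nat.card_Ico, stageEnd_succ, Nat.add_sub_cancel_left]

theorem nCheck_eq_of_mem_stageEpisodes {x : ℕ → ℕ → S × A × B} {H h K k m : ℕ} {y : S × A × B}
    (hk : k ∈ stageEpisodes x H h K y (m + 1)) : nCheck x H h k = stageLen H m := by
  obtain ⟨-, rfl, hm⟩ := Finset.mem_filter.1 hk
  exact checkCnt_of_curStage_eq_succ hm

theorem mem_stageEpisodes_of_ellCheck_eq {x : ℕ → ℕ → S × A × B} {H h K k i j : ℕ} (hH : 0 < H)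
    (hk : k ∈ Finset.Icc 1 K) (hi : i ∈ Finset.Icc 1 (nCheck x H h k))
    (hj : 1 ≤ j) (hij : j = ellCheck x H h k i) :
    k ∈ stageEpisodes x H h K (x j h) (curStage H (Nvis x h j (x j h)) + 1) := by
  obtain ⟨hi₁, hin⟩ := Finset.mem_Icc.1 hi
  obtain ⟨m, hm⟩ := exists_curStage_eq_succ_of_checkCnt_pos (hi₁.trans hin)
  have hlen : nCheck x H h k = stageLen H m := checkCnt_of_curStage_eq_succ hm
  have hvisit : j = visitEp x h (x k h) (stageEnd H m + i) := by
    rw [hij, ellCheck, ellCheckAt, hm, Nat.add_sub_cancel]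
  obtain ⟨hjy, hcount⟩ := visitEp_spec (hvisit ▸ hj)
  rw [← hvisit] at hjy hcount
  have hstage : curStage H (Nvis x h j (x k h)) = m := by
    rw [curStage_eq_iff hH, hcount, stageEnd_succ, Finset.mem_Ico]
    omega
  rw [hjy, hstage]
  exact Finset.mem_filter.2 ⟨hk, rfl, hm⟩

/-- The weight `(1 / ň_h^k) Σ_i 1{j = ℓ̌_{h,i}^k}` of episode `j` in the average over the previous
stage formed at step `h` of episode `k`; it is `0` when `ň_h^k = 0`. -/
noncomputable def prevStageWeight (x : ℕ → ℕ → S × A × B) (H h k j : ℕ) : ℝ :=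
  (nCheck x H h k : ℝ)⁻¹ *
    ∑ i ∈ Finset.Icc 1 (nCheck x H h k), (if j = ellCheck x H h k i then (1 : ℝ) else 0)

theorem prevStageWeight_le_inv_nCheck (x : ℕ → ℕ → S × A × B) (H h k : ℕ) {j : ℕ} (hj : 1 ≤ j) :
    prevStageWeight x H h k j ≤ (nCheck x H h k : ℝ)⁻¹ := by
  refine mul_le_of_le_one_right (by positivity) ?_
  rw [Finset.sum_boole, Nat.cast_le_one, Finset.card_le_one]
  intro i hi i' hi'
  obtain ⟨hin, hij⟩ := Finset.mem_filter.1 hi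
  obtain ⟨hin', hij'⟩ := Finset.mem_filter.1 hi'
  exact ellCheck_injOn x H h k ⟨(Finset.mem_Icc.1 hin).1, hij ▸ hj⟩
    ⟨(Finset.mem_Icc.1 hin').1, hij' ▸ hj⟩ (hij.symm.trans hij')

theorem prevStageWeight_eq_zero {x : ℕ → ℕ → S × A × B} {H h K k j : ℕ} (hH : 0 < H) (hj : 1 ≤ j)
    (hk : k ∈ Finset.Icc 1 K)
    (hkj : k ∉ stageEpisodes x H h K (x j h) (curStage H (Nvis x h j (x j h)) + 1)) :
    prevStageWeight x H h k j = 0 :=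
  mul_eq_zero_of_right _ <| Finset.sum_eq_zero fun _ hi =>
    if_neg fun hij => hkj (mem_stageEpisodes_of_ellCheck_eq hH hk hi hj hij)

end Visits

/-- Lemma `app-lemma:sum-change`. For any step `h ∈ [H]` and any episode
`j ∈ [K]`, along any trajectory `x` of Algorithm 1,
`Σ_{k=1}^K (1/ň_h^k) Σ_{i=1}^{ň_h^k} 1{j = ℓ̌_{h,i}^k} ≤ 1 + 1/H`
(episodes `k` whose visited triple is still in its first stage have `ň_h^k = 0` and
contribute `0`). -/
theorem statement6 {S A B : Type*} [DecidableEq S] [DecidableEq A] [DecidableEq B]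
    (H K : ℕ) (hH : 1 ≤ H) (hK : 1 ≤ K)
    (x : ℕ → ℕ → S × A × B)
    (h : ℕ) (hh1 : 1 ≤ h) (hhH : h ≤ H)
    (j : ℕ) (hj1 : 1 ≤ j) (hjK : j ≤ K) :
    ∑ k ∈ Finset.Icc 1 K, (nCheck x H h k : ℝ)⁻¹ *
        ∑ i ∈ Finset.Icc 1 (nCheck x H h k),
          (if j = ellCheck x H h k i then (1 : ℝ) else 0)
      ≤ 1 + 1 / (H : ℝ) := by
  set m := curStage H (Nvis x h j (x j h))
  set E := stageEpisodes x H h K (x j h) (m + 1)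
  calc ∑ k ∈ Finset.Icc 1 K, prevStageWeight x H h k j
      = ∑ k ∈ E, prevStageWeight x H h k j :=
        (Finset.sum_subset (stageEpisodes_subset x H h K (x j h) (m + 1)) fun _ hk hkE =>
          prevStageWeight_eq_zero hH hj1 hk hkE).symm
    _ ≤ ∑ _k ∈ E, (stageLen H m : ℝ)⁻¹ := Finset.sum_le_sum fun k hk =>
        nCheck_eq_of_mem_stageEpisodes hk ▸ prevStageWeight_le_inv_nCheck x H h k hj1
    _ = E.card / stageLen H m := by
        rw [Finset.sum_const, nsmul_eq_mul, div_eq_mul_inv]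
    _ ≤ stageLen H (m + 1) / stageLen H m := by
        gcongr
        exact card_stageEpisodes_le x hH h K (x j h) (m + 1)
    _ ≤ 1 + 1 / (H : ℝ) := stageLen_succ_div_le H m

end ZSMG
end

section
/- Let {M_n}_{n≥0} be a martingale with M₀ = 0 and |M_n − M_{n−1}| ≤ c almost surely for some c > 0 and all n ≥ 1, with respect to the filtration F_k = σ(M₁,…,M_k). Let Var_n = Σ_{k=1}^n E[(M_k − M_{k−1})² | F_{k−1}]. Then for any positive integer n and any ε, p > 0: P[ |M_n| ≥ 2√(Var_n · log(1/p)) + 2√(ε·log(1/p)) + 2c·log(1/p) ] ≤ (2nc²/ε + 2)·p. -/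
open Finset MeasureTheory

namespace ZSMG

/-! After rescaling, a supermartingale `M` with increments at most `1` and predictable variation `V`
makes `exp (Mₙ - Vₙ)` a supermartingale, because `exp x ≤ 1 + x + x²` for `x ≤ 1` and
`1 + y ≤ exp y`. Markov's inequality then bounds `M` on the event `Vₙ ≤ v` for a deterministic `v`.
To put `Vₙ` itself in the threshold, cut its range `[0, n c²]` into cells of length `ε` and apply
the bound in each cell with `v` the right end point, which exceeds `Vₙ` by at most `ε`. -/

section Exponential

lemma exp_le_one_add_add_sq {x : ℝ} (hx : x ≤ 1) : Real.exp x ≤ 1 + x + x ^ 2 := by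
  rcases le_total (-1) x with h | h
  · linarith [(abs_le.1 (Real.abs_exp_sub_one_sub_id_le (abs_le.2 ⟨h, hx⟩))).2]
  · have : Real.exp x ≤ 1 := Real.exp_le_one_iff.2 (by linarith)
    nlinarith

variable {Ω : Type*} {m m0 : MeasurableSpace Ω} {μ : Measure[m0] Ω} [IsFiniteMeasure μ] {X : Ω → ℝ}

lemma integrable_exp_of_ae_le {c : ℝ} (hX : AEStronglyMeasurable X μ) (hXc : ∀ᵐ ω ∂μ, X ω ≤ c) :
    Integrable (fun ω => Real.exp (X ω)) μ := by
  refine .of_bound (Real.continuous_exp.comp_aestronglyMeasurable hX) (Real.exp c) ?_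
  filter_upwards [hXc] with ω h
  rwa [Real.norm_of_nonneg (Real.exp_nonneg _), Real.exp_le_exp]

lemma condExp_exp_le_exp_condExp_sq (hm : m ≤ m0) (hX : MemLp X 2 μ)
    (hX1 : ∀ᵐ ω ∂μ, X ω ≤ 1) (hcond : μ[X | m] ≤ᵐ[μ] 0) :
    μ[fun ω => Real.exp (X ω) | m] ≤ᵐ[μ] fun ω => Real.exp ((μ[X ^ 2 | m]) ω) := by
  have hXint : Integrable X μ := hX.integrable one_le_two
  have hsq : Integrable (X ^ 2) μ := hX.integrable_sq
  have hone : Integrable (fun _ : Ω => (1 : ℝ)) μ := integrable_const 1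
  have hmono : μ[fun ω => Real.exp (X ω) | m] ≤ᵐ[μ] μ[(fun _ => 1) + X + X ^ 2 | m] := by
    refine condExp_mono (integrable_exp_of_ae_le hX.1 hX1) ((hone.add hXint).add hsq) ?_
    filter_upwards [hX1] with ω h using exp_le_one_add_add_sq h
  filter_upwards [hmono, condExp_add (hone.add hXint) hsq m, condExp_add hone hXint m, hcond]
    with ω hle hadd hadd' hneg
  rw [hadd, Pi.add_apply, hadd', Pi.add_apply, condExp_const hm] at hle
  calc (μ[fun ω => Real.exp (X ω) | m]) ω ≤ (μ[X ^ 2 | m]) ω + 1 := by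
        simp only [Pi.zero_apply] at hneg; linarith
    _ ≤ _ := Real.add_one_le_exp _

end Exponential

section PredictableVariation

variable {Ω : Type*} {m0 : MeasurableSpace Ω}

/-- The predictable quadratic variation of the process `M` with respect to the filtration `F`: the
sum of the conditional second moments of its increments, written `Var_n` in the paper. The
increments are indexed from `0`, so that the `k`-th one is `M (k + 1) - M k`. -/
noncomputable def predictableVariation (μ : Measure Ω) (F : Filtration ℕ m0) (M : ℕ → Ω → ℝ)
    (n : ℕ) : Ω → ℝ :=
  ∑ k ∈ Finset.range n, μ[(M (k + 1) - M k) ^ 2 | F k]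

variable {μ : Measure Ω} {F : Filtration ℕ m0} {M : ℕ → Ω → ℝ}

lemma predictableVariation_apply_eq_sum_Icc (n : ℕ) (ω : Ω) :
    predictableVariation μ F M n ω =
      ∑ k ∈ Finset.Icc 1 n, (μ[fun ω' => (M k ω' - M (k - 1) ω') ^ 2 | F (k - 1)]) ω := by
  rw [predictableVariation, Finset.sum_apply, Finset.range_eq_Ico]
  exact Finset.sum_Ico_add'
    (fun k => (μ[fun ω' => (M k ω' - M (k - 1) ω') ^ 2 | F (k - 1)]) ω) 0 n 1

lemma predictableVariation_zero : predictableVariation μ F M 0 = 0 :=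
  Finset.sum_range_zero _

lemma predictableVariation_succ (n : ℕ) :
    predictableVariation μ F M (n + 1) =
      predictableVariation μ F M n + μ[(M (n + 1) - M n) ^ 2 | F n] :=
  Finset.sum_range_succ _ n

lemma predictableVariation_neg (n : ℕ) :
    predictableVariation μ F (-M) n = predictableVariation μ F M n := by
  refine Finset.sum_congr rfl fun k _ => ?_
  rw [Pi.neg_apply, Pi.neg_apply, ← neg_sub', neg_sq]

lemma predictableVariation_smul (l : ℝ) (n : ℕ) :
    predictableVariation μ F (l • M) n =ᵐ[μ] l ^ 2 • predictableVariation μ F M n := by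
  induction n with
  | zero => simp [predictableVariation_zero]
  | succ n ih =>
    have hincr : ((l • M) (n + 1) - (l • M) n) ^ 2 = l ^ 2 • (M (n + 1) - M n) ^ 2 := by
      rw [Pi.smul_apply, Pi.smul_apply, ← smul_sub, smul_pow]
    rw [predictableVariation_succ, predictableVariation_succ, smul_add, hincr]
    exact ih.add (condExp_smul _ _ _)

lemma predictableVariation_nonneg (n : ℕ) : 0 ≤ᵐ[μ] predictableVariation μ F M n := by
  have hincr (k : ℕ) : 0 ≤ᵐ[μ] μ[(M (k + 1) - M k) ^ 2 | F k] :=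
    condExp_nonneg (ae_of_all _ fun ω => sq_nonneg _)
  filter_upwards [ae_all_iff.2 hincr] with ω h
  rw [predictableVariation, Finset.sum_apply]
  exact Finset.sum_nonneg fun k _ => h k

lemma predictableVariation_le {c : ℝ} (hbdd : ∀ k, ∀ᵐ ω ∂μ, |M (k + 1) ω - M k ω| ≤ c) (n : ℕ) :
    ∀ᵐ ω ∂μ, predictableVariation μ F M n ω ≤ n * c ^ 2 := by
  have hincr (k : ℕ) : ∀ᵐ ω ∂μ, |(μ[(M (k + 1) - M k) ^ 2 | F k]) ω| ≤ c ^ 2 := by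
    refine ae_bdd_abs_condExp_of_ae_bdd_abs ?_
    filter_upwards [hbdd k] with ω h
    simpa [abs_pow] using pow_le_pow_left₀ (abs_nonneg _) h 2
  filter_upwards [ae_all_iff.2 hincr] with ω h
  rw [predictableVariation, Finset.sum_apply, ← nsmul_eq_mul]
  simpa using Finset.sum_le_card_nsmul (Finset.range n) _ _ fun k _ => le_of_abs_le (h k)

lemma stronglyMeasurable_predictableVariation_succ (n : ℕ) :
    StronglyMeasurable[F n] (predictableVariation μ F M (n + 1)) :=
  Finset.stronglyMeasurable_sum _ fun _ hk =>
    stronglyMeasurable_condExp.mono (F.mono (Finset.mem_range_succ_iff.1 hk))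

lemma stronglyAdapted_predictableVariation : StronglyAdapted F (predictableVariation μ F M)
  | 0 => by rw [predictableVariation_zero]; exact stronglyMeasurable_zero
  | n + 1 => (stronglyMeasurable_predictableVariation_succ n).mono (F.mono n.le_succ)

end PredictableVariation

section CompensatedExp

variable {Ω : Type*} {m0 : MeasurableSpace Ω}

/-- The exponential of the process `M` compensated by its predictable quadratic variation, the
supermartingale behind Freedman's inequality. -/
noncomputable def compensatedExp (μ : Measure Ω) (F : Filtration ℕ m0) (M : ℕ → Ω → ℝ) (n : ℕ)
    (ω : Ω) : ℝ :=
  Real.exp (M n ω - predictableVariation μ F M n ω)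

variable {μ : Measure Ω} {F : Filtration ℕ m0} {M : ℕ → Ω → ℝ}

lemma stronglyAdapted_compensatedExp (hM : StronglyAdapted F M) :
    StronglyAdapted F (compensatedExp μ F M) := fun n =>
  Real.continuous_exp.comp_stronglyMeasurable
    ((hM n).sub (stronglyAdapted_predictableVariation n))

lemma ae_le_add_of_increments_le {c : ℝ} (hincr : ∀ k, ∀ᵐ ω ∂μ, M (k + 1) ω - M k ω ≤ c) (n : ℕ) :
    ∀ᵐ ω ∂μ, M n ω ≤ M 0 ω + n * c := by
  filter_upwards [ae_all_iff.2 hincr] with ω h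
  induction n with
  | zero => simp
  | succ k ih => push_cast; linarith [h k]

lemma integrable_compensatedExp (hM : StronglyAdapted F M)
    (hM0 : Integrable (fun ω => Real.exp (M 0 ω)) μ)
    (hincr : ∀ k, ∀ᵐ ω ∂μ, M (k + 1) ω - M k ω ≤ 1) (n : ℕ) :
    Integrable (compensatedExp μ F M n) μ := by
  refine (hM0.mul_const (Real.exp n)).mono'
    ((stronglyAdapted_compensatedExp hM n).mono (F.le n)).aestronglyMeasurable ?_
  filter_upwards [ae_le_add_of_increments_le hincr n,
    predictableVariation_nonneg (F := F) (M := M) n] with ω hle hnonneg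
  rw [Pi.zero_apply] at hnonneg
  rw [compensatedExp, Real.norm_of_nonneg (Real.exp_nonneg _), ← Real.exp_add, Real.exp_le_exp]
  linarith

lemma compensatedExp_succ (n : ℕ) :
    compensatedExp μ F M (n + 1) =
      (fun ω => Real.exp (M n ω - predictableVariation μ F M (n + 1) ω)) *
        fun ω => Real.exp ((M (n + 1) - M n) ω) := by
  ext ω
  rw [Pi.mul_apply, ← Real.exp_add, compensatedExp, Pi.sub_apply]
  ring_nf

variable [IsFiniteMeasure μ]

lemma condExp_compensatedExp_succ_le (hM : Supermartingale M F μ)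
    (hM0 : Integrable (fun ω => Real.exp (M 0 ω)) μ) (hL2 : ∀ k, MemLp (M (k + 1) - M k) 2 μ)
    (hincr : ∀ k, ∀ᵐ ω ∂μ, M (k + 1) ω - M k ω ≤ 1) (n : ℕ) :
    μ[compensatedExp μ F M (n + 1) | F n] ≤ᵐ[μ] compensatedExp μ F M n := by
  have hmeas : StronglyMeasurable[F n]
      fun ω => Real.exp (M n ω - predictableVariation μ F M (n + 1) ω) :=
    Real.continuous_exp.comp_stronglyMeasurable
      ((hM.1 n).sub (stronglyMeasurable_predictableVariation_succ n))
  have hint := integrable_compensatedExp hM.1 hM0 hincr (n + 1)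
  rw [compensatedExp_succ] at hint ⊢
  have hpull := condExp_mul_of_stronglyMeasurable_left hmeas hint
    (integrable_exp_of_ae_le (hL2 n).1 (hincr n))
  have hdrift : μ[M (n + 1) - M n | F n] ≤ᵐ[μ] 0 := by
    filter_upwards [condExp_sub (hM.integrable (n + 1)) (hM.integrable n) (F n),
      hM.condExp_ae_le n.le_succ] with ω hsub hle
    rw [hsub, Pi.sub_apply, condExp_of_stronglyMeasurable (F.le n) (hM.1 n) (hM.integrable n)]
    exact sub_nonpos.2 hle
  filter_upwards [hpull, condExp_exp_le_exp_condExp_sq (F.le n) (hL2 n) (hincr n) hdrift]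
    with ω hpull hle
  rw [hpull, Pi.mul_apply]
  refine (mul_le_mul_of_nonneg_left hle (Real.exp_nonneg _)).trans_eq ?_
  rw [← Real.exp_add, compensatedExp, predictableVariation_succ, Pi.add_apply]
  ring_nf

lemma supermartingale_compensatedExp (hM : Supermartingale M F μ)
    (hM0 : Integrable (fun ω => Real.exp (M 0 ω)) μ) (hL2 : ∀ k, MemLp (M (k + 1) - M k) 2 μ)
    (hincr : ∀ k, ∀ᵐ ω ∂μ, M (k + 1) ω - M k ω ≤ 1) :
    Supermartingale (compensatedExp μ F M) F μ :=
  supermartingale_nat (stronglyAdapted_compensatedExp hM.1)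
    (integrable_compensatedExp hM.1 hM0 hincr) (condExp_compensatedExp_succ_le hM hM0 hL2 hincr)

lemma integral_compensatedExp_le (hM : Supermartingale M F μ)
    (hM0 : Integrable (fun ω => Real.exp (M 0 ω)) μ) (hL2 : ∀ k, MemLp (M (k + 1) - M k) 2 μ)
    (hincr : ∀ k, ∀ᵐ ω ∂μ, M (k + 1) ω - M k ω ≤ 1) (n : ℕ) :
    ∫ ω, compensatedExp μ F M n ω ∂μ ≤ ∫ ω, Real.exp (M 0 ω) ∂μ := by
  simpa [compensatedExp, predictableVariation_zero] using
    (supermartingale_compensatedExp hM hM0 hL2 hincr).setIntegral_le n.zero_le MeasurableSet.univ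

end CompensatedExp

section Freedman

variable {Ω : Type*} {m0 : MeasurableSpace Ω} {μ : Measure Ω} [IsProbabilityMeasure μ]
  {F : Filtration ℕ m0} {M : ℕ → Ω → ℝ} {c : ℝ}

lemma measure_ge_le_exp_of_increments_le_one (hM : Supermartingale M F μ) (hM0 : M 0 ≤ᵐ[μ] 0)
    (hL2 : ∀ k, MemLp (M (k + 1) - M k) 2 μ)
    (hincr : ∀ k, ∀ᵐ ω ∂μ, M (k + 1) ω - M k ω ≤ 1) (n : ℕ) (t v : ℝ) :
    μ {ω | t ≤ M n ω ∧ predictableVariation μ F M n ω ≤ v} ≤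
      ENNReal.ofReal (Real.exp (-(t - v))) := by
  have hexp0 : Integrable (fun ω => Real.exp (M 0 ω)) μ :=
    integrable_exp_of_ae_le (hM.integrable 0).1 hM0
  have hmean : ∫ ω, compensatedExp μ F M n ω ∂μ ≤ 1 :=
    calc ∫ ω, compensatedExp μ F M n ω ∂μ ≤ ∫ ω, Real.exp (M 0 ω) ∂μ :=
          integral_compensatedExp_le hM hexp0 hL2 hincr n
      _ ≤ ∫ _, 1 ∂μ := by
          refine integral_mono_ae hexp0 (integrable_const 1) ?_
          filter_upwards [hM0] with ω h using Real.exp_le_one_iff.2 h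
      _ = 1 := by simp
  have hmarkov := (mul_meas_ge_le_integral_of_nonneg
    (ae_of_all μ fun ω => Real.exp_nonneg (M n ω - predictableVariation μ F M n ω))
    (integrable_compensatedExp hM.1 hexp0 hincr n) (Real.exp (t - v))).trans hmean
  have hsub : {ω | t ≤ M n ω ∧ predictableVariation μ F M n ω ≤ v} ⊆
      {ω | Real.exp (t - v) ≤ compensatedExp μ F M n ω} :=
    fun ω ⟨ht, hv⟩ => Real.exp_le_exp.2 (sub_le_sub ht hv)
  refine (measure_mono hsub).trans ?_
  rw [← ofReal_measureReal]
  refine ENNReal.ofReal_le_ofReal ?_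
  rwa [Real.exp_neg, ← one_div, le_div_iff₀' (Real.exp_pos _)]

lemma measure_ge_le_exp_of_increments_le (hM : Supermartingale M F μ) (hM0 : M 0 ≤ᵐ[μ] 0)
    (hL2 : ∀ k, MemLp (M (k + 1) - M k) 2 μ)
    (hincr : ∀ k, ∀ᵐ ω ∂μ, M (k + 1) ω - M k ω ≤ c) {l : ℝ} (hl : 0 ≤ l) (hlc : l * c ≤ 1)
    (n : ℕ) (t v : ℝ) :
    μ {ω | t ≤ M n ω ∧ predictableVariation μ F M n ω ≤ v} ≤
      ENNReal.ofReal (Real.exp (-(l * t - l ^ 2 * v))) := by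
  have hM0' : (l • M) 0 ≤ᵐ[μ] 0 := by
    filter_upwards [hM0] with ω h using mul_nonpos_of_nonneg_of_nonpos hl h
  have hL2' (k : ℕ) : MemLp ((l • M) (k + 1) - (l • M) k) 2 μ := by
    rw [Pi.smul_apply, Pi.smul_apply, ← smul_sub]
    exact (hL2 k).const_smul l
  have hincr' (k : ℕ) : ∀ᵐ ω ∂μ, (l • M) (k + 1) ω - (l • M) k ω ≤ 1 := by
    filter_upwards [hincr k] with ω h
    calc l * M (k + 1) ω - l * M k ω = l * (M (k + 1) ω - M k ω) := by ring
      _ ≤ l * c := mul_le_mul_of_nonneg_left h hl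
      _ ≤ 1 := hlc
  refine (measure_mono_ae ?_).trans
    (measure_ge_le_exp_of_increments_le_one (hM.smul_nonneg hl) hM0' hL2' hincr' n _ _)
  filter_upwards [predictableVariation_smul (μ := μ) (F := F) (M := M) l n] with ω hsmul ⟨ht, hv⟩
  refine ⟨mul_le_mul_of_nonneg_left ht hl, ?_⟩
  rw [hsmul]
  exact mul_le_mul_of_nonneg_left hv (sq_nonneg l)

lemma exists_freedman_exponent_ge (hc : 0 ≤ c) {v L : ℝ} (hv : 0 < v) (hL : 0 ≤ L) :
    ∃ l, 0 ≤ l ∧ l * c ≤ 1 ∧ L ≤ l * (2 * √(v * L) + 2 * c * L) - l ^ 2 * v := by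
  obtain ⟨x, hx, rfl⟩ : ∃ x, 0 < x ∧ x ^ 2 = v := ⟨√v, Real.sqrt_pos.2 hv, Real.sq_sqrt hv.le⟩
  obtain ⟨y, hy, rfl⟩ : ∃ y, 0 ≤ y ∧ y ^ 2 = L := ⟨√L, Real.sqrt_nonneg L, Real.sq_sqrt hL⟩
  have hden : 0 < x + c * y := by positivity
  have hratio : x / (x + c * y) ≤ 1 := (div_le_one hden).2 (by nlinarith)
  -- `y / x` maximizes `l * (2 * x * y) - l ^ 2 * v`; adding `c * y` to `x` ensures `l * c ≤ 1`.
  refine ⟨y / (x + c * y), by positivity, ?_, ?_⟩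
  · rw [div_mul_eq_mul_div, div_le_one hden]
    linarith
  · have hratio_sq : (x / (x + c * y)) ^ 2 ≤ 1 := pow_le_one₀ (by positivity) hratio
    rw [← mul_pow, Real.sqrt_sq (by positivity)]
    calc y ^ 2 ≤ 2 * y ^ 2 - y ^ 2 * (x / (x + c * y)) ^ 2 := by
          linarith [mul_le_of_le_one_right (sq_nonneg y) hratio_sq]
      _ = _ := by field_simp

lemma measure_ge_two_mul_sqrt_le (hM : Supermartingale M F μ) (hM0 : M 0 ≤ᵐ[μ] 0)
    (hL2 : ∀ k, MemLp (M (k + 1) - M k) 2 μ) (hc : 0 ≤ c)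
    (hincr : ∀ k, ∀ᵐ ω ∂μ, M (k + 1) ω - M k ω ≤ c) (n : ℕ) {v L : ℝ} (hv : 0 < v)
    (hL : 0 ≤ L) :
    μ {ω | 2 * √(v * L) + 2 * c * L ≤ M n ω ∧ predictableVariation μ F M n ω ≤ v} ≤
      ENNReal.ofReal (Real.exp (-L)) := by
  obtain ⟨l, hl, hlc, hlL⟩ := exists_freedman_exponent_ge hc hv hL
  refine (measure_ge_le_exp_of_increments_le hM hM0 hL2 hincr hl hlc n _ v).trans ?_
  gcongr

lemma measure_abs_ge_two_mul_sqrt_le (hM : Martingale M F μ) (hM0 : M 0 =ᵐ[μ] 0) (hc : 0 ≤ c)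
    (hbdd : ∀ k, ∀ᵐ ω ∂μ, |M (k + 1) ω - M k ω| ≤ c) (n : ℕ) {v L : ℝ} (hv : 0 < v)
    (hL : 0 ≤ L) :
    μ {ω | 2 * √(v * L) + 2 * c * L ≤ |M n ω| ∧ predictableVariation μ F M n ω ≤ v} ≤
      ENNReal.ofReal (2 * Real.exp (-L)) := by
  have hL2 (k : ℕ) : MemLp (M (k + 1) - M k) 2 μ :=
    .of_bound ((hM.integrable _).1.sub (hM.integrable _).1) c (hbdd k)
  have hupper := measure_ge_two_mul_sqrt_le hM.supermartingale hM0.le hL2 hc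
    (fun k => (hbdd k).mono fun ω => le_of_abs_le) n hv hL
  have hincr_neg (k : ℕ) : (-M) (k + 1) - (-M) k = -(M (k + 1) - M k) := (neg_sub' _ _).symm
  have hlower := measure_ge_two_mul_sqrt_le hM.neg.supermartingale (by simpa using hM0.neg.le)
    (fun k => hincr_neg k ▸ (hL2 k).neg) hc
    (fun k => (hbdd k).mono fun ω h =>
      (congr_fun (hincr_neg k) ω).trans_le ((neg_le_abs _).trans h)) n hv hL
  rw [predictableVariation_neg] at hlower
  rw [two_mul (Real.exp _), ENNReal.ofReal_add (Real.exp_nonneg _) (Real.exp_nonneg _)]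
  refine (measure_mono ?_).trans ((measure_union_le _ _).trans (add_le_add hupper hlower))
  rintro ω ⟨habs, hV⟩
  exact (le_abs.1 habs).imp (⟨·, hV⟩) (⟨·, hV⟩)

end Freedman

section Peeling

variable {Ω : Type*} [MeasurableSpace Ω] {μ : Measure Ω}

lemma measure_comp_add_le_of_forall_measure_le {V Y : Ω → ℝ} {f : ℝ → ℝ} (hf : Monotone f)
    {b ε : ℝ} (hε : 0 < ε) (hV0 : 0 ≤ᵐ[μ] V) (hVb : ∀ᵐ ω ∂μ, V ω ≤ b) {δ : ENNReal}
    (hδ : ∀ v, 0 < v → μ {ω | f v ≤ Y ω ∧ V ω ≤ v} ≤ δ) :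
    μ {ω | f (V ω + ε) ≤ Y ω} ≤ (⌊b / ε⌋₊ + 1) * δ := by
  let cell (i : ℕ) : Set Ω := {ω | f ((i + 1) * ε) ≤ Y ω ∧ V ω ≤ (i + 1) * ε}
  have hcover : {ω | f (V ω + ε) ≤ Y ω} ≤ᵐ[μ] ⋃ i ∈ Finset.range (⌊b / ε⌋₊ + 1), cell i := by
    filter_upwards [hV0, hVb] with ω h0 hb hω
    have hleft : ⌊V ω / ε⌋₊ * ε ≤ V ω := (le_div_iff₀ hε).1 (Nat.floor_le (div_nonneg h0 hε.le))
    have hright : V ω < (⌊V ω / ε⌋₊ + 1) * ε := (div_lt_iff₀ hε).1 (Nat.lt_floor_add_one _)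
    refine Set.mem_biUnion (x := ⌊V ω / ε⌋₊) ?_ ⟨(hf (by linarith)).trans hω, hright.le⟩
    exact Finset.mem_coe.2 (Finset.mem_range_succ_iff.2 (Nat.floor_le_floor (by gcongr)))
  calc μ {ω | f (V ω + ε) ≤ Y ω} ≤ μ (⋃ i ∈ Finset.range (⌊b / ε⌋₊ + 1), cell i) :=
        measure_mono_ae hcover
    _ ≤ ∑ i ∈ Finset.range (⌊b / ε⌋₊ + 1), μ (cell i) := measure_biUnion_finset_le _ _
    _ ≤ ∑ _i ∈ Finset.range (⌊b / ε⌋₊ + 1), δ :=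
        Finset.sum_le_sum fun i _ => hδ _ (by positivity)
    _ = (⌊b / ε⌋₊ + 1) * δ := by simp

end Peeling

lemma measure_abs_ge_sqrt_predictableVariation_le {Ω : Type*} {m0 : MeasurableSpace Ω}
    {μ : Measure Ω} [IsProbabilityMeasure μ] {F : Filtration ℕ m0} {M : ℕ → Ω → ℝ} {c : ℝ}
    (hM : Martingale M F μ) (hM0 : M 0 =ᵐ[μ] 0)
    (hbdd : ∀ k, ∀ᵐ ω ∂μ, |M (k + 1) ω - M k ω| ≤ c) (n : ℕ) {ε L : ℝ} (hε : 0 < ε)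
    (hL : 0 ≤ L) :
    μ {ω | 2 * √(predictableVariation μ F M n ω * L) + 2 * √(ε * L) + 2 * c * L ≤ |M n ω|} ≤
      ENNReal.ofReal ((2 * n * c ^ 2 / ε + 2) * Real.exp (-L)) := by
  have hc : 0 ≤ c := (hbdd 0).exists.elim fun ω h => (abs_nonneg _).trans h
  have hthreshold : Monotone fun v => 2 * √(v * L) + 2 * c * L := fun _ _ h => by
    dsimp only; gcongr
  have hsqrt {v : ℝ} (hv : 0 ≤ v) : √((v + ε) * L) ≤ √(v * L) + √(ε * L) := by
    simpa only [add_mul, Real.sqrt_eq_rpow] using Real.rpow_add_le_add_rpow (mul_nonneg hv hL)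
      (mul_nonneg hε.le hL) one_half_pos.le one_half_lt_one.le
  set V := predictableVariation μ F M n
  calc μ {ω | 2 * √(V ω * L) + 2 * √(ε * L) + 2 * c * L ≤ |M n ω|} ≤
        μ {ω | 2 * √((V ω + ε) * L) + 2 * c * L ≤ |M n ω|} :=
        measure_mono_ae <| (predictableVariation_nonneg n).mono fun ω hV hω =>
          le_trans (by linarith [hsqrt hV]) hω
    _ ≤ (⌊n * c ^ 2 / ε⌋₊ + 1) * ENNReal.ofReal (2 * Real.exp (-L)) :=
        measure_comp_add_le_of_forall_measure_le hthreshold hε (predictableVariation_nonneg n)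
          (predictableVariation_le hbdd n)
          fun v hv => measure_abs_ge_two_mul_sqrt_le hM hM0 hc hbdd n hv hL
    _ = ENNReal.ofReal ((⌊n * c ^ 2 / ε⌋₊ + 1) * (2 * Real.exp (-L))) := by
        rw [← Nat.cast_add_one, ← Nat.cast_add_one, ENNReal.ofReal_mul (Nat.cast_nonneg _),
          ENNReal.ofReal_natCast]
    _ ≤ ENNReal.ofReal ((n * c ^ 2 / ε + 1) * (2 * Real.exp (-L))) := by
        gcongr
        exact Nat.floor_le (by positivity)
    _ = ENNReal.ofReal ((2 * n * c ^ 2 / ε + 2) * Real.exp (-L)) := by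
        ring_nf

theorem statement13_general {Ω : Type*} {m0 : MeasurableSpace Ω} {μ : Measure Ω}
    [IsProbabilityMeasure μ] {F : Filtration ℕ m0} {M : ℕ → Ω → ℝ} {c : ℝ}
    (hM : Martingale M F μ) (hM0 : M 0 =ᵐ[μ] 0)
    (hbdd : ∀ k, ∀ᵐ ω ∂μ, |M (k + 1) ω - M k ω| ≤ c) (n : ℕ) {ε p : ℝ} (hε : 0 < ε)
    (hp : 0 < p) :
    μ {ω | 2 * √(predictableVariation μ F M n ω * Real.log (1 / p)) +
          2 * √(ε * Real.log (1 / p)) + 2 * c * Real.log (1 / p) ≤ |M n ω|} ≤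
      ENNReal.ofReal ((2 * n * c ^ 2 / ε + 2) * p) := by
  rcases le_or_gt 1 p with h1p | hp1
  · have : 0 ≤ 2 * n * c ^ 2 / ε := by positivity
    exact prob_le_one.trans (ENNReal.one_le_ofReal.2 (by nlinarith))
  · have hexp : Real.exp (-Real.log (1 / p)) = p := by
      rw [one_div, Real.log_inv, neg_neg, Real.exp_log hp]
    simpa only [hexp] using measure_abs_ge_sqrt_predictableVariation_le hM hM0 hbdd n hε
      (Real.log_nonneg (one_le_one_div hp hp1.le))

/-- Lemma 10 of Zhang–Zhou–Ji.  Let `M` be a martingale with `M₀ = 0` and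
increments bounded by `c`, with respect to its natural filtration `F_k = σ(M₀,…,M_k)`
(which agrees with `σ(M₁,…,M_k)` since `M₀ = 0`).  Let
`Var_n = Σ_{k=1}^n E[(M_k - M_{k-1})² | F_{k-1}]`.  Then for any `n ≥ 1` and `ε, p > 0`,
`P[|M_n| ≥ 2√(Var_n log(1/p)) + 2√(ε log(1/p)) + 2c log(1/p)] ≤ (2nc²/ε + 2) p`. -/
theorem statement13 {Ω : Type*} [m0 : MeasurableSpace Ω]
    (P : Measure Ω) [IsProbabilityMeasure P]
    (M : ℕ → Ω → ℝ) (hmeas : ∀ n, StronglyMeasurable (M n))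
    (hmart : Martingale M (Filtration.natural M hmeas) P)
    (hM0 : ∀ ω, M 0 ω = 0)
    (c : ℝ) (hc : 0 < c)
    (hbdd : ∀ n, 1 ≤ n → ∀ᵐ ω ∂P, |M n ω - M (n - 1) ω| ≤ c)
    (n : ℕ) (hn : 1 ≤ n) (ε p : ℝ) (hε : 0 < ε) (hp : 0 < p) :
    P {ω | 2 * Real.sqrt ((∑ k ∈ Finset.Icc 1 n,
            (P[(fun ω' => (M k ω' - M (k - 1) ω') ^ 2)|
                (Filtration.natural M hmeas) (k - 1)]) ω) * Real.log (1 / p)) +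
          2 * Real.sqrt (ε * Real.log (1 / p)) + 2 * c * Real.log (1 / p) ≤ |M n ω|}
      ≤ ENNReal.ofReal ((2 * n * c ^ 2 / ε + 2) * p) := by
  simpa only [predictableVariation_apply_eq_sum_Icc] using
    statement13_general hmart (ae_of_all _ hM0) (fun k => hbdd (k + 1) k.succ_pos) n hε hp

end ZSMG
end

section
/- Let H ≥ 1 be an integer and define e₁ = H, e_{i+1} = ⌊(1+1/H)e_i⌋ for i ≥ 1. Then for any positive integers j and T with j ≤ T: Σ over all z ≥ 2 such that j ≤ Σ_{i=1}^{z−1} e_i ≤ T of e_z/(Σ_{i=1}^{z−1} e_i) ≤ 2(log T + 1). -/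
open Finset MeasureTheory

namespace ZSMG

/-!
The increments of a positive sequence `s` satisfy `(s (k + 1) - s k) / s (k + 1) ≤
log s (k + 1) - log s k`, because `1 - 1 / t ≤ log t`. Hence `∑ k, a k / (a 0 + ⋯ + a k)`
telescopes to at most `1 + log ((a 0 + ⋯ + a n) / a 0)`, the `1` being the term `k = 0`. Stage
lengths grow by a factor of at most `1 + 1 / H ≤ 2`, so replacing the numerators `a k` by
`a (k + 1)` costs at most a factor of `2`.
-/

section PartialSums

theorem sub_div_le_log_sub_log {x y : ℝ} (hx : 0 < x) (hy : 0 < y) :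
    (y - x) / y ≤ Real.log y - Real.log x := by
  rw [← Real.log_div hy.ne' hx.ne', sub_div, div_self hy.ne', ← inv_div y x]
  exact Real.one_sub_inv_le_log_of_pos (div_pos hy hx)

theorem sum_sub_div_le_log_div {s : ℕ → ℝ} (hs : ∀ k, 0 < s k) (n : ℕ) :
    ∑ k ∈ range n, (s (k + 1) - s k) / s (k + 1) ≤ Real.log (s n / s 0) :=
  calc ∑ k ∈ range n, (s (k + 1) - s k) / s (k + 1)
      ≤ ∑ k ∈ range n, (Real.log (s (k + 1)) - Real.log (s k)) :=
        sum_le_sum fun k _ => sub_div_le_log_sub_log (hs k) (hs (k + 1))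
    _ = Real.log (s n / s 0) := by
        rw [sum_range_sub fun k => Real.log (s k), Real.log_div (hs n).ne' (hs 0).ne']

theorem sum_range_succ_pos {M : Type*} [AddCommMonoid M] [PartialOrder M]
    [IsOrderedCancelAddMonoid M] {a : ℕ → M} (h₀ : 0 < a 0) (ha : ∀ i, 0 ≤ a i) (m : ℕ) :
    0 < ∑ i ∈ range (m + 1), a i :=
  sum_pos' (fun i _ => ha i) ⟨0, by simp, h₀⟩

variable {a : ℕ → ℝ}

theorem sum_range_div_sum_range_succ_le (h₀ : 0 < a 0) (ha : ∀ i, 0 ≤ a i) (n : ℕ) :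
    ∑ m ∈ range (n + 1), a m / ∑ i ∈ range (m + 1), a i ≤
      1 + Real.log ((∑ i ∈ range (n + 1), a i) / a 0) := by
  have htelescope := sum_sub_div_le_log_div (sum_range_succ_pos h₀ ha) n
  simp only [sum_range_succ_sub_sum, zero_add, sum_range_one] at htelescope
  rw [sum_range_succ', zero_add, sum_range_one, div_self h₀.ne', add_comm]
  gcongr

theorem sum_div_sum_range_succ_le (h₀ : 0 < a 0) (ha : ∀ i, 0 ≤ a i) {F : Finset ℕ}
    (hF : F.Nonempty) {T : ℝ} (hT : ∀ m ∈ F, ∑ i ∈ range (m + 1), a i ≤ T) :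
    ∑ m ∈ F, a m / ∑ i ∈ range (m + 1), a i ≤ 1 + Real.log (T / a 0) := by
  set M := F.max' hF
  have hsub : F ⊆ range (M + 1) := fun m hm =>
    mem_range_succ_iff.2 (F.le_max' m hm)
  have hpos := sum_range_succ_pos h₀ ha
  calc ∑ m ∈ F, a m / ∑ i ∈ range (m + 1), a i
      ≤ ∑ m ∈ range (M + 1), a m / ∑ i ∈ range (m + 1), a i :=
        sum_le_sum_of_subset_of_nonneg hsub fun m _ _ => div_nonneg (ha m) (hpos m).le
    _ ≤ 1 + Real.log ((∑ i ∈ range (M + 1), a i) / a 0) :=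
        sum_range_div_sum_range_succ_le h₀ ha M
    _ ≤ 1 + Real.log (T / a 0) := by
        gcongr
        · exact div_pos (hpos M) h₀
        · exact hT M (F.max'_mem hF)

end PartialSums

theorem cast_stageLen_succ_le (H i : ℕ) :
    (stageLen H (i + 1) : ℝ) ≤ (1 + 1 / H) * stageLen H i := by
  rw [stageLen, Nat.cast_add, one_add_mul, one_div_mul_eq_div]
  gcongr
  exact Nat.cast_div_le

theorem sum_stageLen_succ_div_stageEnd_succ_le {H : ℕ} (hH : 1 ≤ H) {F : Finset ℕ}
    (hF : F.Nonempty) {T : ℝ} (hT : ∀ m ∈ F, (stageEnd H (m + 1) : ℝ) ≤ T) :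
    ∑ m ∈ F, (stageLen H (m + 1) : ℝ) / stageEnd H (m + 1) ≤
      (1 + 1 / H) * (1 + Real.log (T / H)) := by
  have hlen₀ : (0 : ℝ) < stageLen H 0 := Nat.cast_pos.2 hH
  calc ∑ m ∈ F, (stageLen H (m + 1) : ℝ) / stageEnd H (m + 1)
      ≤ ∑ m ∈ F, (1 + 1 / (H : ℝ)) * stageLen H m / stageEnd H (m + 1) := by
        gcongr with m
        exact cast_stageLen_succ_le H m
    _ = (1 + 1 / H) * ∑ m ∈ F, (stageLen H m : ℝ) / stageEnd H (m + 1) := by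
        simp only [mul_div_assoc, mul_sum]
    _ ≤ (1 + 1 / H) * (1 + Real.log (T / H)) := by
        gcongr
        simp only [stageEnd, Nat.cast_sum] at hT ⊢
        exact sum_div_sum_range_succ_le hlen₀ (fun i => Nat.cast_nonneg _) hF hT

theorem sum_Icc_two_pred {M : Type*} [AddCommMonoid M] (f : ℕ → M) (n : ℕ) :
    ∑ z ∈ Icc 2 (n + 1), f (z - 1) = ∑ m ∈ range n, f (m + 1) :=
  sum_nbij' (· - 2) (· + 2) (by simp; lia) (by simp) (by simp; lia) (by simp)
    fun z hz => by congr 1; have := mem_Icc.1 hz; lia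

/-- For the stage lengths `e₁ = H`, `e_{i+1} = ⌊(1+1/H)e_i⌋`, and any
`1 ≤ j ≤ T`, the sum of `e_z / (e₁ + ⋯ + e_{z-1})` over all `z ≥ 2` with
`j ≤ e₁ + ⋯ + e_{z-1} ≤ T` is at most `2 (log T + 1)`.
(Here `stageLen H (z-1) = e_z` and `stageEnd H (z-1) = e₁ + ⋯ + e_{z-1}`; all indices `z`
with a nonzero contribution satisfy `z ≤ T + 1`, so the sum below is the full sum.) -/
theorem statement18 (H : ℕ) (hH : 1 ≤ H) (j T : ℕ) (hj : 1 ≤ j) (hjT : j ≤ T) :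
    ∑ z ∈ Finset.Icc 2 (T + 1),
        (if j ≤ stageEnd H (z - 1) ∧ stageEnd H (z - 1) ≤ T then
          (stageLen H (z - 1) : ℝ) / (stageEnd H (z - 1) : ℝ) else 0)
      ≤ 2 * (Real.log T + 1) := by
  have hH' : (1 : ℝ) ≤ H := Nat.one_le_cast.2 hH
  have hT : (0 : ℝ) < T := Nat.cast_pos.2 (hj.trans hjT)
  have hgrowth : 1 + 1 / (H : ℝ) ≤ 2 := by
    linarith [div_le_one_of_le₀ hH' (zero_le_one.trans hH')]
  rw [sum_Icc_two_pred fun m => if j ≤ stageEnd H m ∧ stageEnd H m ≤ T then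
    (stageLen H m : ℝ) / (stageEnd H m : ℝ) else 0, ← sum_filter]
  set F := {m ∈ range T | j ≤ stageEnd H (m + 1) ∧ stageEnd H (m + 1) ≤ T}
  rcases F.eq_empty_or_nonempty with hF | hF
  · rw [hF, sum_empty]
    positivity
  · have hFT : ∀ m ∈ F, (stageEnd H (m + 1) : ℝ) ≤ T := fun m hm =>
      Nat.cast_le.2 (mem_filter.1 hm).2.2
    calc ∑ m ∈ F, (stageLen H (m + 1) : ℝ) / stageEnd H (m + 1)
        ≤ (1 + 1 / H) * (1 + Real.log (T / H)) :=
          sum_stageLen_succ_div_stageEnd_succ_le hH hF hFT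
      _ ≤ (1 + 1 / H) * (1 + Real.log T) := by
          gcongr
          exact div_le_self hT.le hH'
      _ ≤ 2 * (Real.log T + 1) := by
          rw [add_comm (Real.log T)]
          gcongr

end ZSMG
end
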